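/- arXiv:2001.00474 — 6 statements merged into one kernel-verified Lean document; each statement's English description precedes it below -/
import Mathlib

section
/- Let Ψ be an automorphism of ℙ^n over F_q with Ψ = [M] ∈ PGL_{n+1}(F_q). Then Ψ is transitive on ℙ^n if and only if the characteristic polynomial χ_M ∈ F_q[x] of M is projectively primitive. -/
/-- The projective automorphism of `ℙ^n(K)` induced by an invertible matrix `M`. -/
noncomputable def projMap {K : Type*} [Field K] {n : ℕ} (M : GL (Fin (n + 1)) K) :
    Projectivization K (Fin (n + 1) → K) → Projectivization K (Fin (n + 1) → K) :=
  Projectivization.map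
    ((Matrix.GeneralLinearGroup.toLin M).toLinearEquiv :
      (Fin (n + 1) → K) →ₗ[K] (Fin (n + 1) → K))
    (Matrix.GeneralLinearGroup.toLin M).toLinearEquiv.injective

/-- The projective automorphism induced by `M` is transitive on `ℙ^n(K)`. -/
def ProjTransitive {K : Type*} [Field K] {n : ℕ} (M : GL (Fin (n + 1)) K) : Prop :=
  ∀ P Q : Projectivization K (Fin (n + 1) → K), ∃ k : ℕ, (projMap M)^[k] P = Q

/-- A polynomial `χ` over a field `K` is *projectively primitive* if it is irreducible and,
for any root `α` of `χ` in `K[x]/(χ)`, the class `[α]` of `α` in the quotient group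
`(K[x]/(χ))^* / K^*` generates that group; concretely, `α` is nonzero and every nonzero
element `β` of `K[x]/(χ)` can be written as `c • α ^ k` with `c ∈ K`. -/
def ProjectivelyPrimitive {K : Type*} [Field K] (χ : Polynomial K) : Prop :=
  Irreducible χ ∧
    ∀ α : AdjoinRoot χ, Polynomial.aeval α χ = 0 →
      α ≠ 0 ∧ ∀ β : AdjoinRoot χ, β ≠ 0 →
        ∃ (k : ℕ) (c : K), β = algebraMap K (AdjoinRoot χ) c * α ^ k

/-!
If `χ` annihilates `f`, every vector `v` defines a linear map `K[x]/(χ) → V`, `p ↦ p(f) v`, sending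
`c αᵏ` (`α` the class of `x`) to `c fᵏ(v)`. For `χ` the characteristic polynomial of `f` both sides
have the same dimension. If `f` is projectively transitive, these maps are surjective, hence
injective, for all `v ≠ 0`: so `p(f) v = 0` only if `χ ∣ p`, and if `χ ∣ a b`, then evaluating
`a(f)` at `b(f) v` shows `χ ∣ a` or `χ ∣ b`. Conversely, if `χ` is irreducible, Bézout makes all
these maps injective, hence bijective. In either case they match the powers of `α` modulo scalars
with the projective orbits of `f`.
-/

open Polynomial

section CyclicMap

variable {R M : Type*} [CommRing R] [AddCommGroup M] [Module R M]
  {f : Module.End R M} {χ : R[X]}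

/-- The linear map `R[x]/(χ) → M`, `p ↦ p(f) v`, attached to an endomorphism `f` killed by `χ` and a
vector `v`; its range is the cyclic `R[x]`-submodule generated by `v`. -/
noncomputable def cyclicMap (hχ : aeval f χ = 0) (v : M) : AdjoinRoot χ →ₗ[R] M :=
  LinearMap.applyₗ v ∘ₗ (Ideal.Quotient.liftₐ (Ideal.span {χ}) (aeval f) fun p hp => by
    obtain ⟨q, rfl⟩ := Ideal.mem_span_singleton.1 hp
    rw [map_mul, hχ, zero_mul]).toLinearMap

theorem cyclicMap_mk (hχ : aeval f χ = 0) (v : M) (p : R[X]) :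
    cyclicMap hχ v (AdjoinRoot.mk χ p) = aeval f p v :=
  rfl

theorem cyclicMap_root_pow (hχ : aeval f χ = 0) (v : M) (k : ℕ) :
    cyclicMap hχ v (AdjoinRoot.root χ ^ k) = (f ^ k) v := by
  rw [← AdjoinRoot.mk_X, ← map_pow, cyclicMap_mk, aeval_X_pow]

theorem cyclicMap_injective_iff (hχ : aeval f χ = 0) (v : M) :
    Function.Injective (cyclicMap hχ v) ↔ ∀ p : R[X], aeval f p v = 0 → χ ∣ p := by
  simp only [injective_iff_map_eq_zero, AdjoinRoot.mk_surjective.forall, cyclicMap_mk,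
    AdjoinRoot.mk_eq_zero]

theorem adjoinRoot_root_ne_zero_of_injective [Nontrivial M] (hf : Function.Injective f)
    (hχ : aeval f χ = 0) : AdjoinRoot.root χ ≠ 0 := fun hroot => by
  obtain ⟨v, hv⟩ := exists_ne (0 : M)
  have hfv : f v = 0 := by simpa [hroot] using (cyclicMap_root_pow hχ v 1).symm
  exact hv (hf (hfv.trans (map_zero f).symm))

theorem prime_of_cyclicMap_injective [Nontrivial M] (hχ : aeval f χ = 0) (hχ0 : χ ≠ 0)
    (hinj : ∀ v : M, v ≠ 0 → Function.Injective (cyclicMap hχ v)) : Prime χ := by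
  simp only [cyclicMap_injective_iff] at hinj
  obtain ⟨v, hv⟩ := exists_ne (0 : M)
  have hunit : ¬IsUnit χ := fun hu => by
    have : aeval f (1 : R[X]) = 0 := aeval_eq_zero_of_dvd_aeval_eq_zero hu.dvd hχ
    exact hv (by simpa using LinearMap.congr_fun this v)
  refine ⟨hχ0, hunit, fun a b ⟨c, hab⟩ => ?_⟩
  have hkill : aeval f a (aeval f b v) = 0 := by
    rw [← Module.End.mul_apply, ← map_mul, hab, map_mul, hχ, zero_mul, LinearMap.zero_apply]
  by_cases hb : aeval f b v = 0
  · exact .inr (hinj v hv b hb)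
  · exact .inl (hinj _ hb a hkill)

end CyclicMap

section Irreducible

variable {K V : Type*} [Field K] [AddCommGroup V] [Module K V] {f : Module.End K V} {χ : K[X]}

theorem cyclicMap_injective_of_irreducible (hχ : aeval f χ = 0) (hirr : Irreducible χ)
    {v : V} (hv : v ≠ 0) : Function.Injective (cyclicMap hχ v) := by
  refine (cyclicMap_injective_iff hχ v).2 fun p hp => ?_
  by_contra hdvd
  obtain ⟨a, b, hab⟩ := hirr.coprime_iff_not_dvd.2 hdvd
  have bezout : aeval f (a * χ + b * p) v = v := by rw [hab, map_one, Module.End.one_apply]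
  exact hv (by simpa [hχ, hp] using bezout.symm)

theorem irreducible_iff_cyclicMap_injective [Nontrivial V] (hχ : aeval f χ = 0) (hχ0 : χ ≠ 0) :
    Irreducible χ ↔ ∀ v : V, v ≠ 0 → Function.Injective (cyclicMap hχ v) :=
  ⟨fun hirr _ hv => cyclicMap_injective_of_irreducible hχ hirr hv,
    fun hinj => (prime_of_cyclicMap_injective hχ hχ0 hinj).irreducible⟩

theorem cyclicMap_charpoly_injective_iff_surjective [FiniteDimensional K V] (v : V) :
    Function.Injective (cyclicMap f.aeval_self_charpoly v) ↔
      Function.Surjective (cyclicMap f.aeval_self_charpoly v) := by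
  have : Module.Finite K (AdjoinRoot f.charpoly) := f.charpoly_monic.finite_adjoinRoot
  have hrank : Module.finrank K (AdjoinRoot f.charpoly) = Module.finrank K V :=
    finrank_quotient_span_eq_natDegree.trans f.charpoly_natDegree
  exact LinearMap.injective_iff_surjective_of_finrank_eq_finrank hrank

end Irreducible

section ProjOrbit

variable {R M : Type*} [CommRing R] [AddCommGroup M] [Module R M]

/-- The forward orbit of `v` under `f` is everything up to scalars. The vector `0` is covered by the
scalar `0`, so over a field, with `f` injective and `v ≠ 0`, this says that the orbit of the point
`[v]` is the whole projective space. -/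
def HasFullProjOrbit (f : Module.End R M) (v : M) : Prop :=
  ∀ w : M, ∃ (k : ℕ) (c : R), w = c • (f ^ k) v

variable (R) in
/-- Every element of the algebra `A` is a scalar multiple of a power of `a`; when `A` is a field
extension of `R` and `a ≠ 0`, this says that the class of `a` generates `Aˣ / Rˣ` as a monoid. -/
def GeneratesModScalars {A : Type*} [Ring A] [Algebra R A] (a : A) : Prop :=
  ∀ b : A, ∃ (k : ℕ) (c : R), b = c • a ^ k

theorem GeneratesModScalars.map {A B : Type*} [Ring A] [Algebra R A] [Ring B] [Algebra R B]
    {a : A} (ha : GeneratesModScalars R a) {φ : A →ₐ[R] B} (hφ : Function.Surjective φ) :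
    GeneratesModScalars R (φ a) :=
  hφ.forall.2 fun b => by
    obtain ⟨k, c, rfl⟩ := ha b
    exact ⟨k, c, by rw [map_smul, map_pow]⟩

variable {f : Module.End R M} {χ : R[X]} {v : M}

theorem HasFullProjOrbit.cyclicMap_surjective (hv : HasFullProjOrbit f v) (hχ : aeval f χ = 0) :
    Function.Surjective (cyclicMap hχ v) := fun w => by
  obtain ⟨k, c, rfl⟩ := hv w
  exact ⟨c • AdjoinRoot.root χ ^ k, by rw [map_smul, cyclicMap_root_pow]⟩

theorem generatesModScalars_root_iff_hasFullProjOrbit (hχ : aeval f χ = 0)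
    (hbij : Function.Bijective (cyclicMap hχ v)) :
    GeneratesModScalars R (AdjoinRoot.root χ) ↔ HasFullProjOrbit f v := by
  simp only [GeneratesModScalars, HasFullProjOrbit, hbij.surjective.forall,
    ← cyclicMap_root_pow hχ, ← map_smul, hbij.injective.eq_iff]

end ProjOrbit

section Projective

variable {K : Type*} [Field K]

theorem projectivelyPrimitive_iff_root {χ : K[X]} :
    ProjectivelyPrimitive χ ↔
      Irreducible χ ∧ AdjoinRoot.root χ ≠ 0 ∧ GeneratesModScalars K (AdjoinRoot.root χ) := by
  constructor
  · rintro ⟨hirr, hroots⟩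
    obtain ⟨hne, hgen⟩ := hroots (AdjoinRoot.root χ) (AdjoinRoot.eval₂_root χ)
    refine ⟨hirr, hne, fun b => ?_⟩
    obtain rfl | hb := eq_or_ne b 0
    · exact ⟨0, 0, (zero_smul K _).symm⟩
    · simpa only [Algebra.smul_def] using hgen b hb
  · rintro ⟨hirr, hne, hgen⟩
    have : Fact (Irreducible χ) := ⟨hirr⟩
    refine ⟨hirr, fun α hα => ?_⟩
    let σ : AdjoinRoot χ →ₐ[K] AdjoinRoot χ := AdjoinRoot.liftAlgHom χ (Algebra.ofId K _) α hα
    have hσroot : σ (AdjoinRoot.root χ) = α := AdjoinRoot.liftAlgHom_root ..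
    have : FiniteDimensional K (AdjoinRoot χ) := (AdjoinRoot.powerBasis hirr.ne_zero).finite
    have hσ : Function.Bijective σ := σ.bijective
    rw [← hσroot]
    refine ⟨(map_ne_zero σ).2 hne, fun β _ => ?_⟩
    simpa only [Algebra.smul_def] using hgen.map hσ.surjective β

variable {V : Type*} [AddCommGroup V] [Module K V]

theorem iterate_projectivizationMap {f : Module.End K V} (hf : Function.Injective f) (k : ℕ) :
    (Projectivization.map f hf)^[k] =
      Projectivization.map (f ^ k) (Module.End.coe_pow f k ▸ hf.iterate k) := by
  induction k with
  | zero => exact Projectivization.map_id.symm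
  | succ k ih =>
    rw [Function.iterate_succ', ih, ← Projectivization.map_comp]
    congr 1
    exact (pow_succ' f k).symm

theorem forall_exists_iterate_projectivizationMap_eq_iff {f : Module.End K V}
    (hf : Function.Injective f) :
    (∀ P Q : Projectivization K V, ∃ k : ℕ, (Projectivization.map f hf)^[k] P = Q) ↔
      ∀ v : V, v ≠ 0 → HasFullProjOrbit f v := by
  simp only [iterate_projectivizationMap hf]
  constructor
  · intro htrans v hv w
    obtain rfl | hw := eq_or_ne w 0
    · exact ⟨0, 0, (zero_smul K _).symm⟩
    obtain ⟨k, hk⟩ := htrans (.mk K v hv) (.mk K w hw)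
    obtain ⟨c, hc⟩ := (Projectivization.mk_eq_mk_iff' ..).1 hk.symm
    exact ⟨k, c, hc.symm⟩
  · intro hfull P Q
    induction P with | h v hv =>
    induction Q with | h w hw =>
    obtain ⟨k, c, hc⟩ := hfull v hv w
    exact ⟨k, ((Projectivization.mk_eq_mk_iff' ..).2 ⟨c, hc.symm⟩).symm⟩

theorem statement2_general [FiniteDimensional K V] [Nontrivial V] {f : Module.End K V}
    (hf : Function.Injective f) :
    (∀ P Q : Projectivization K V, ∃ k : ℕ, (Projectivization.map f hf)^[k] P = Q) ↔
      ProjectivelyPrimitive f.charpoly := by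
  have hχ := f.aeval_self_charpoly
  have hirr_iff := irreducible_iff_cyclicMap_injective hχ f.charpoly_monic.ne_zero
  have hbij {v : V} (hinj : Function.Injective (cyclicMap hχ v)) :
      Function.Bijective (cyclicMap hχ v) :=
    ⟨hinj, (cyclicMap_charpoly_injective_iff_surjective v).1 hinj⟩
  rw [forall_exists_iterate_projectivizationMap_eq_iff, projectivelyPrimitive_iff_root]
  constructor
  · intro hfull
    have hinj (v : V) (hv : v ≠ 0) : Function.Injective (cyclicMap hχ v) :=
      (cyclicMap_charpoly_injective_iff_surjective v).2 ((hfull v hv).cyclicMap_surjective hχ)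
    obtain ⟨v, hv⟩ := exists_ne (0 : V)
    exact ⟨hirr_iff.2 hinj, adjoinRoot_root_ne_zero_of_injective hf hχ,
      (generatesModScalars_root_iff_hasFullProjOrbit hχ (hbij (hinj v hv))).2 (hfull v hv)⟩
  · rintro ⟨hirr, -, hgen⟩ v hv
    exact (generatesModScalars_root_iff_hasFullProjOrbit hχ (hbij (hirr_iff.1 hirr v hv))).1 hgen

end Projective

/-- An automorphism `Ψ = [M] ∈ PGL_{n+1}(F_q)` of `ℙ^n` is transitive if and only if the
characteristic polynomial of `M` is projectively primitive. -/
theorem statement2 {K : Type*} [Field K] [Fintype K] (n : ℕ) (hn : 0 < n)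
    (M : GL (Fin (n + 1)) K) :
    ProjTransitive M ↔
      ProjectivelyPrimitive ((M : Matrix (Fin (n + 1)) (Fin (n + 1)) K).charpoly) := by
  rw [← Matrix.charpoly_toLin']
  exact statement2_general (Matrix.GeneralLinearGroup.toLin M).toLinearEquiv.injective
end

section
/- Let q be a prime power, m a positive integer, N = (q^m − 1)/(q − 1), and α ∈ F_{q^m}^* such that the class [α] of α has order N in the quotient group F_{q^m}^*/F_q^* (so that μ := α^N ∈ F_q^*). Then there exist a generator g of the cyclic group F_q^* and a natural number e with gcd(N, e) = 1 such that μ = g^e. -/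
/-!
Let `γ` generate a cyclic group `G`, and let `H ≤ G`. The class of `γ` in `G ⧸ H` has order
`H.index`, so `γ ^ k ∈ H` exactly when `H.index ∣ k`; hence `γ ^ H.index` generates `H`.
If `α = γ ^ e` also generates `G ⧸ H`, then `e` is coprime to `H.index`, and
`α ^ H.index = (γ ^ H.index) ^ e`. Apply this to `G = L^*` and `H = K^*`, where
`H.index = (q ^ m - 1) / (q - 1)`.
-/

open Subgroup

section Cyclic

variable {G : Type*} [Group G]

theorem exists_zpowers_eq_top_and_pow_eq [IsCyclic G] (a : G) :
    ∃ (g : G) (n : ℕ), zpowers g = ⊤ ∧ g ^ n = a := by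
  obtain ⟨g, hg⟩ := isCyclic_iff_exists_zpowers_eq_top.mp ‹IsCyclic G›
  obtain ⟨k, rfl⟩ := mem_zpowers_iff.mp (hg ▸ mem_top a)
  obtain ⟨n, rfl | rfl⟩ := k.eq_nat_or_neg
  · exact ⟨g, n, hg, (zpow_natCast g n).symm⟩
  · exact ⟨g⁻¹, n, by rw [zpowers_inv, hg], by rw [zpow_neg, zpow_natCast, inv_pow]⟩

theorem zpowers_eq_top_of_orderOf_eq_natCard [Finite G] {a : G} (ha : orderOf a = Nat.card G) :
    zpowers a = ⊤ :=
  eq_top_of_card_eq _ (by rw [Nat.card_zpowers, ha])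

theorem coprime_orderOf_of_zpowers_pow_eq_top {a : G} {n : ℕ} (h : zpowers (a ^ n) = ⊤) :
    (orderOf a).Coprime n :=
  Nat.Coprime.symm (mem_zpowers_pow_iff.mp (h ▸ mem_top a))

variable {H : Subgroup G} [H.Normal] {g : G}

theorem orderOf_mk_eq_index_of_zpowers_eq_top (hg : zpowers g = ⊤) :
    orderOf (g : G ⧸ H) = H.index := by
  refine orderOf_eq_card_of_zpowers_eq_top ?_
  rw [← QuotientGroup.mk'_apply, ← MonoidHom.map_zpowers, hg,
    map_top_of_surjective _ (QuotientGroup.mk'_surjective H)]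

theorem zpowers_pow_index_of_zpowers_eq_top (hg : zpowers g = ⊤) :
    zpowers (g ^ H.index) = H := by
  refine le_antisymm (zpowers_le.mpr (pow_index_mem H g)) fun x hx ↦ ?_
  obtain ⟨k, rfl⟩ := mem_zpowers_iff.mp (hg ▸ mem_top x)
  have index_dvd : (H.index : ℤ) ∣ k := by
    rw [← orderOf_mk_eq_index_of_zpowers_eq_top hg, orderOf_dvd_iff_zpow_eq_one,
      ← QuotientGroup.mk_zpow, QuotientGroup.eq_one_iff]
    exact hx
  obtain ⟨j, rfl⟩ := index_dvd
  exact mem_zpowers_iff.mpr ⟨j, by rw [zpow_mul, zpow_natCast]⟩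

end Cyclic

theorem index_range_unitsMap_algebraMap (K L : Type*) [Field K] [Finite K] [DivisionRing L]
    [Algebra K L] :
    (Units.map (algebraMap K L).toMonoidHom).range.index =
      (Nat.card L - 1) / (Nat.card K - 1) := by
  have card_range : Nat.card (Units.map (algebraMap K L).toMonoidHom).range = Nat.card K - 1 := by
    rw [← Nat.card_units]
    exact (Nat.card_congr
      (MonoidHom.ofInjective (Units.map_injective (algebraMap K L).injective)).toEquiv).symm
  have card_sub_one_pos : 0 < Nat.card K - 1 := Nat.sub_pos_of_lt Finite.one_lt_card
  refine (Nat.div_eq_of_eq_mul_left card_sub_one_pos ?_).symm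
  rw [← card_range, index_mul_card, Nat.card_units]

theorem statement5_general {A G : Type*} [Group A] [CommGroup G] [IsCyclic G] (f : A →* G)
    (hf : Function.Injective f) (α : G) (hα : zpowers (α : G ⧸ f.range) = ⊤) :
    ∃ (g : A) (e : ℕ), zpowers g = ⊤ ∧ Nat.gcd f.range.index e = 1 ∧
      f (g ^ e) = α ^ f.range.index := by
  obtain ⟨γ, e, hγ, rfl⟩ := exists_zpowers_eq_top_and_pow_eq α
  have generates_range : zpowers (γ ^ f.range.index) = f.range :=
    zpowers_pow_index_of_zpowers_eq_top hγ
  obtain ⟨g, hg⟩ : γ ^ f.range.index ∈ f.range := pow_index_mem f.range γ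
  refine ⟨g, e, map_injective hf ?_, ?_, ?_⟩
  · rw [MonoidHom.map_zpowers, hg, generates_range, MonoidHom.range_eq_map]
  · rw [← orderOf_mk_eq_index_of_zpowers_eq_top hγ]
    exact coprime_orderOf_of_zpowers_pow_eq_top hα
  · rw [map_pow, hg, pow_right_comm]

/-- Let `K = F_q ⊆ L = F_{q^m}` be finite fields, `N = (q^m - 1)/(q - 1)`, and let
`α ∈ L^*` be such that its class `[α]` has order `N` in the quotient group `L^* / K^*`
(so that `μ := α^N` lies in `K^*`). Then there exist a generator `g` of the cyclic group
`K^*` and a natural number `e` with `gcd(N, e) = 1` such that `μ = g^e`. -/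
theorem statement5 {K L : Type*} [Field K] [Field L] [Fintype K] [Fintype L] [Algebra K L]
    (m : ℕ) (hm : 0 < m) (hcard : Fintype.card L = Fintype.card K ^ m) (α : Lˣ)
    (hord : orderOf (QuotientGroup.mk α :
        Lˣ ⧸ (Units.map (algebraMap K L).toMonoidHom).range) =
      (Fintype.card K ^ m - 1) / (Fintype.card K - 1)) :
    ∃ (g : Kˣ) (e : ℕ), Subgroup.zpowers g = ⊤ ∧
      Nat.gcd ((Fintype.card K ^ m - 1) / (Fintype.card K - 1)) e = 1 ∧
      Units.map (algebraMap K L).toMonoidHom (g ^ e) =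
        α ^ ((Fintype.card K ^ m - 1) / (Fintype.card K - 1)) := by
  rw [← hcard, ← Nat.card_eq_fintype_card, ← Nat.card_eq_fintype_card,
    ← index_range_unitsMap_algebraMap] at hord ⊢
  exact statement5_general _ (Units.map_injective (algebraMap K L).injective) α
    (zpowers_eq_top_of_orderOf_eq_natCard hord)
end

section
/- Let Ψ ∈ PGL_{n+1}(F_q) be transitive on ℙ^n. Then for every point P ∈ U there exists an integer k with 1 ≤ k ≤ n+1 such that Ψ^k(P) ∈ U; that is, the absolute fractional jump index J_Ψ of Ψ is at most n+1. -/
/-- The affine chart `U = {X_n ≠ 0} ⊆ ℙ^n(K)`. -/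
def affineChart (K : Type*) [Field K] (n : ℕ) : Set (Projectivization K (Fin (n + 1) → K)) :=
  {P | P.rep (Fin.last n) ≠ 0}

/-- The hyperplane at infinity `H = {X_n = 0} ⊆ ℙ^n(K)`. -/
def hyperplaneAtInfinity (K : Type*) [Field K] (n : ℕ) :
    Set (Projectivization K (Fin (n + 1) → K)) :=
  {P | P.rep (Fin.last n) = 0}

/-!
Let `f` be an automorphism of a free module of rank `d`. The constant coefficient of its
characteristic polynomial is a unit, so the Cayley–Hamilton identity can be solved for `f ^ 0`:
every vector `v` lies in the span of `f v, …, f ^ d v`. Hence a submodule containing all of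
`f v, …, f ^ d v` contains `v`. For `d = n + 1` and the hyperplane `X_n = 0`, this says that a
point of the affine chart cannot have its next `n + 1` images all at infinity.
-/

section LinearAlgebra

variable {R V : Type*} [CommRing R] [AddCommGroup V] [Module R V] [Module.Free R V]
  [Module.Finite R V] {f : Module.End R V}

lemma isUnit_charpoly_coeff_zero (hf : IsUnit f) : IsUnit (f.charpoly.coeff 0) := by
  have hdet : IsUnit f.det := f.isUnit_iff_isUnit_det.1 hf
  rw [LinearMap.det_eq_sign_charpoly_coeff] at hdet
  exact isUnit_of_mul_isUnit_right hdet

variable (f) in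
lemma charpoly_coeff_zero_smul_eq_neg_sum (v : V) :
    f.charpoly.coeff 0 • v =
      -∑ i ∈ Finset.range (Module.finrank R V), f.charpoly.coeff (i + 1) • (f ^ (i + 1)) v := by
  nontriviality R using Module.subsingleton R V
  have cayley_hamilton := LinearMap.congr_fun f.aeval_self_charpoly v
  rw [Polynomial.aeval_eq_sum_range, f.charpoly_natDegree, Finset.sum_range_succ',
    add_comm] at cayley_hamilton
  simpa [LinearMap.sum_apply] using eq_neg_of_add_eq_zero_left cayley_hamilton

lemma mem_span_pow_apply (hf : IsUnit f) (v : V) :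
    v ∈ Submodule.span R ((fun k ↦ (f ^ k) v) '' Set.Icc 1 (Module.finrank R V)) := by
  rw [← Submodule.smul_mem_iff_of_isUnit _ (isUnit_charpoly_coeff_zero hf),
    charpoly_coeff_zero_smul_eq_neg_sum]
  refine neg_mem (sum_mem fun i hi ↦ Submodule.smul_mem _ _ (Submodule.subset_span ?_))
  exact Set.mem_image_of_mem _ ⟨i.succ_pos, Finset.mem_range.1 hi⟩

lemma exists_pow_apply_notMem (hf : IsUnit f) {W : Submodule R V} {v : V} (hv : v ∉ W) :
    ∃ k ∈ Set.Icc 1 (Module.finrank R V), (f ^ k) v ∉ W := by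
  contrapose! hv
  exact Submodule.span_le.2 (Set.image_subset_iff.2 hv) (mem_span_pow_apply hf v)

end LinearAlgebra

lemma projectivization_map_iterate {K V : Type*} [DivisionRing K] [AddCommGroup V] [Module K V]
    (f : Module.End K V) (hf : Function.Injective f) (k : ℕ) :
    (Projectivization.map f hf)^[k] =
      Projectivization.map (f ^ k) (Module.End.iterate_injective hf k) := by
  induction k with
  | zero => exact Projectivization.map_id.symm
  | succ k ih =>
    ext P
    induction P using Projectivization.ind with | h v hv =>
    simp only [Function.iterate_succ_apply', ih, Projectivization.map_mk, pow_succ',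
      Module.End.mul_apply]

section AffineChart

variable {K : Type*} [Field K] {n : ℕ}

lemma mk_mem_affineChart {v : Fin (n + 1) → K} (hv : v ≠ 0) :
    Projectivization.mk K v hv ∈ affineChart K n ↔ v (Fin.last n) ≠ 0 := by
  obtain ⟨a, ha⟩ := Projectivization.exists_smul_eq_mk_rep K v hv
  simp [affineChart, ← ha, Units.smul_def]

lemma projMap_iterate_mk_mem_affineChart (M : GL (Fin (n + 1)) K) (k : ℕ)
    {v : Fin (n + 1) → K} (hv : v ≠ 0) :
    (projMap M)^[k] (Projectivization.mk K v hv) ∈ affineChart K n ↔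
      ((Matrix.GeneralLinearGroup.toLin M : Module.End K (Fin (n + 1) → K)) ^ k) v
        (Fin.last n) ≠ 0 := by
  rw [projMap, projectivization_map_iterate, Projectivization.map_mk, mk_mem_affineChart]
  rfl

theorem statement6_general (M : GL (Fin (n + 1)) K)
    {P : Projectivization K (Fin (n + 1) → K)} (hP : P ∈ affineChart K n) :
    ∃ k : ℕ, 1 ≤ k ∧ k ≤ n + 1 ∧ (projMap M)^[k] P ∈ affineChart K n := by
  induction P using Projectivization.ind with | h v hv =>
  rw [mk_mem_affineChart] at hP
  obtain ⟨k, ⟨hk_pos, hk_le⟩, hk⟩ :=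
    exists_pow_apply_notMem (Matrix.GeneralLinearGroup.toLin M).isUnit
      (W := LinearMap.ker (LinearMap.proj (Fin.last n))) (v := v) hP
  rw [Module.finrank_fin_fun] at hk_le
  exact ⟨k, hk_pos, hk_le, (projMap_iterate_mk_mem_affineChart M k hv).2 hk⟩

end AffineChart

/-- If `Ψ = [M] ∈ PGL_{n+1}(F_q)` is transitive on `ℙ^n`, then for every point `P ∈ U` there
exists `k` with `1 ≤ k ≤ n + 1` such that `Ψ^k(P) ∈ U`; that is, the absolute fractional
jump index of `Ψ` is at most `n + 1`. -/
theorem statement6 {K : Type*} [Field K] [Fintype K] (n : ℕ) (hn : 0 < n)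
    (M : GL (Fin (n + 1)) K) (htrans : ProjTransitive M) :
    ∀ P ∈ affineChart K n, ∃ k : ℕ, 1 ≤ k ∧ k ≤ n + 1 ∧
      (projMap M)^[k] P ∈ affineChart K n :=
  fun _ ↦ statement6_general M
end

section
/- Let Ψ ∈ PGL_{n+1}(F_q) be an automorphism of ℙ^n and ψ its fractional jump. Suppose it is not the case that (q is prime and n = 1), and not the case that (q = 2 and n = 2). Then Ψ acts transitively on ℙ^n if and only if ψ acts transitively on A^n = F_q^n. -/
/-- The embedding `π : A^n → U ⊆ ℙ^n(K)`, `(x_1, …, x_n) ↦ [x_1 : ⋯ : x_n : 1]`. -/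
def toProj {K : Type*} [Field K] {n : ℕ} (x : Fin n → K) :
    Projectivization K (Fin (n + 1) → K) :=
  Projectivization.mk K (Fin.snoc x 1) (fun h => by
    have h1 := congrFun h (Fin.last n)
    simp at h1)

/-- The inverse `π⁻¹ : U → A^n` of the affine embedding (junk values off `U`). -/
noncomputable def fromProj {K : Type*} [Field K] {n : ℕ}
    (P : Projectivization K (Fin (n + 1) → K)) : Fin n → K :=
  fun i => P.rep (Fin.castSucc i) / P.rep (Fin.last n)

/-- The fractional jump index `J_{π(x),Ψ} = min {k ≥ 1 : Ψ^k(π(x)) ∈ U}`. -/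
noncomputable def jumpIndex {K : Type*} [Field K] {n : ℕ} (M : GL (Fin (n + 1)) K)
    (x : Fin n → K) : ℕ :=
  sInf {k : ℕ | 1 ≤ k ∧ (projMap M)^[k] (toProj x) ∈ affineChart K n}

/-- The fractional jump `ψ(x) = π⁻¹(Ψ^{J_{π(x),Ψ}}(π(x)))` of the projective automorphism
induced by `M`. -/
noncomputable def fracJump {K : Type*} [Field K] {n : ℕ} (M : GL (Fin (n + 1)) K)
    (x : Fin n → K) : Fin n → K :=
  fromProj ((projMap M)^[jumpIndex M x] (toProj x))

/-!
Suppose that the points off a hyperplane `ker φ` lie in one orbit of `Ψ = [g]`. Then the ambient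
space is cyclic over `K[X]`, with `X` acting as `g`, so it can be identified with a quotient `R` of
`K[X]`, and the base vector with `1`. Every `r : R` with `φ r ≠ 0` is a unit `c • X ^ k`. If `a` is
not of this form then neither is `u * a` for `u = c • X ^ k` and `c ≠ 0`, so `φ (u * a) = 0`, and
`φ (r * a) = 0` for all `r` because such `u` span `R`. Since `φ 1 ≠ 0`, this forces `a` to be a
non-unit, and the sum of two non-units to be a non-unit: `R` is local and `Rˣ ⧸ Kˣ` is cyclic.

If `R` is a field, every nonzero vector is in the orbit and `Ψ` is transitive. Otherwise let `m` be
the maximal ideal and `m ^ s` its last nonzero power. The group `1 + m` embeds into the cyclic group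
`Rˣ ⧸ Kˣ`, hence at most `p ^ t` elements of `R` satisfy `y ^ p ^ t = 0`, where `p` is the
characteristic. This bounds the size of the powers of `m`: from `m ^ s` one gets `q = p` and
`dim (m ^ s) = 1`, from `m ^ (s - 1)` that `s = 1` or `s = p = 2`, and these are the exceptional
cases.
-/

open Module Polynomial IsLocalRing
open scoped LinearAlgebra.Projectivization

section Hyperplane

theorem addSubgroup_eq_top_of_compl_ker_subset {V A : Type*} [AddGroup V] [AddGroup A]
    {S : AddSubgroup V} (φ : V →+ A) {v₀ : V} (hv₀ : φ v₀ ≠ 0) (hS : ∀ v, φ v ≠ 0 → v ∈ S) :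
    S = ⊤ := by
  refine (AddSubgroup.eq_top_iff' S).2 fun v => ?_
  by_cases hv : φ v = 0
  · have hadd : v + v₀ ∈ S := hS _ (by rwa [map_add, hv, zero_add])
    exact (S.add_mem_cancel_right (hS v₀ hv₀)).1 hadd
  · exact hS v hv

variable {R A : Type*} [CommRing R] [AddGroup A] {φ : R →+ A} {G : Subgroup Rˣ}

theorem map_mul_eq_zero_of_forall_ne (hφ : φ 1 ≠ 0) (hG : ∀ r, φ r ≠ 0 → ∃ g ∈ G, (g : R) = r)
    {a : R} (ha : ∀ g ∈ G, (g : R) ≠ a) (r : R) : φ (r * a) = 0 := by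
  have hker : (φ.comp (AddMonoidHom.mulRight a)).ker = ⊤ := by
    refine addSubgroup_eq_top_of_compl_ker_subset φ hφ fun r hr => ?_
    obtain ⟨g, hg, rfl⟩ := hG r hr
    by_contra hne
    obtain ⟨k, hk, hka⟩ := hG (g * a) hne
    exact ha (g⁻¹ * k) (G.mul_mem (G.inv_mem hg) hk) (by
      rw [Units.val_mul, hka, Units.inv_mul_cancel_left])
  exact (AddSubgroup.eq_top_iff' _).1 hker r

theorem eq_top_of_compl_ker_subset_units (hφ : φ 1 ≠ 0)
    (hG : ∀ r, φ r ≠ 0 → ∃ g ∈ G, (g : R) = r) : G = ⊤ := by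
  refine (Subgroup.eq_top_iff' G).2 fun u => ?_
  by_contra hu
  refine hφ ?_
  rw [← u.inv_mul]
  exact map_mul_eq_zero_of_forall_ne hφ hG (fun g hg hgu => hu ((Units.ext hgu : g = u) ▸ hg)) _

theorem isLocalRing_of_compl_ker_subset_units (hφ : φ 1 ≠ 0) (hunit : ∀ r, φ r ≠ 0 → IsUnit r) :
    IsLocalRing R := by
  have hG : ∀ r, φ r ≠ 0 → ∃ g ∈ (⊤ : Subgroup Rˣ), (g : R) = r := fun r hr =>
    ⟨(hunit r hr).unit, Subgroup.mem_top _, rfl⟩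
  have : Nontrivial R := ⟨1, 0, fun h => hφ (by rw [h, map_zero])⟩
  refine IsLocalRing.of_nonunits_add fun a b ha hb => ?_
  rintro ⟨u, hu⟩
  have hzero : ∀ {a : R}, a ∈ nonunits R → φ (↑u⁻¹ * a) = 0 := fun ha =>
    map_mul_eq_zero_of_forall_ne hφ hG (fun g _ hga => ha (hga.subst g.isUnit)) _
  refine hφ ?_
  rw [← u.inv_mul, hu, mul_add, map_add, hzero ha, hzero hb, add_zero]

end Hyperplane

/-- The group `Kˣ` of scalars inside the unit group of a `K`-algebra `R`. It is factored out of `Rˣ`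
because `[M]` determines `M` only up to a scalar. -/
def scalarUnits (K R : Type*) [Field K] [CommRing R] [Algebra K R] : Subgroup Rˣ :=
  (Units.map (algebraMap K R : K →* R)).range

section UnitsModScalars

variable {K R : Type*} [Field K] [CommRing R] [Algebra K R]

theorem mk_mem_zpowers_mk_iff [Nontrivial R] [Finite (Rˣ ⧸ scalarUnits K R)] {x u : Rˣ} :
    (u : Rˣ ⧸ scalarUnits K R) ∈ Subgroup.zpowers (x : Rˣ ⧸ scalarUnits K R) ↔
      ∃ c : K, ∃ k : ℕ, (u : R) = c • (x : R) ^ k := by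
  rw [← mem_powers_iff_mem_zpowers, Submonoid.mem_powers_iff]
  constructor
  · rintro ⟨k, hk⟩
    rw [← QuotientGroup.mk_pow, QuotientGroup.eq] at hk
    obtain ⟨c, hc⟩ := hk
    refine ⟨c, k, ?_⟩
    rw [eq_inv_mul_iff_mul_eq, mul_comm] at hc
    simpa [Algebra.smul_def] using (congrArg Units.val hc).symm
  · rintro ⟨c, k, hu⟩
    have hc : c ≠ 0 := by
      rintro rfl
      exact u.ne_zero (by rw [hu, zero_smul])
    refine ⟨k, ?_⟩
    rw [← QuotientGroup.mk_pow, QuotientGroup.eq, scalarUnits]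
    refine ⟨Units.mk0 c hc, eq_inv_mul_of_mul_eq (Units.ext ?_)⟩
    simp [hu, Algebra.smul_def, mul_comm]

theorem natCard_pow_eq_zero_le [Nontrivial R] [Finite (Rˣ ⧸ scalarUnits K R)]
    [IsCyclic (Rˣ ⧸ scalarUnits K R)] (p : ℕ) [Fact p.Prime] [CharP K p] (t : ℕ) :
    Nat.card {y : R // y ^ p ^ t = 0} ≤ p ^ t := by
  classical
  have := charP_of_injective_algebraMap (algebraMap K R).injective p
  let := Fintype.ofFinite (Rˣ ⧸ scalarUnits K R)
  have hpos : 0 < p ^ t := pow_pos (Fact.out : p.Prime).pos t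
  have hunit (y : {y : R // y ^ p ^ t = 0}) : IsUnit (1 + y.1) :=
    IsNilpotent.isUnit_one_add ⟨_, y.2⟩
  let F (y : {y : R // y ^ p ^ t = 0}) : {a : Rˣ ⧸ scalarUnits K R // a ^ p ^ t = 1} :=
    ⟨(hunit y).unit, by
      have hpow : (hunit y).unit ^ p ^ t = 1 := Units.ext (by simp [add_pow_char_pow, y.2])
      rw [← QuotientGroup.mk_pow, hpow, QuotientGroup.mk_one]⟩
  have hF : Function.Injective F := by
    intro y z hyz
    obtain ⟨c, hc⟩ := QuotientGroup.eq.1 (congrArg Subtype.val hyz)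
    have hscalar : (1 + y.1) * algebraMap K R c = 1 + z.1 := by
      simpa using congrArg Units.val (eq_inv_mul_iff_mul_eq.1 hc)
    have hc_sub : algebraMap K R (c - 1) = z.1 - y.1 * algebraMap K R c := by
      rw [map_sub, map_one]
      linear_combination hscalar
    have hnil : algebraMap K R ((c - 1) ^ p ^ t) = 0 := by
      rw [map_pow, hc_sub, sub_pow_char_pow, mul_pow, y.2, z.2, zero_mul, sub_zero]
    have hc_one : (c : K) = 1 :=
      sub_eq_zero.1 (pow_eq_zero_iff hpos.ne' |>.1 ((map_eq_zero (algebraMap K R)).1 hnil))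
    rw [hc_one, map_one, mul_one] at hscalar
    exact Subtype.ext (add_left_cancel hscalar)
  calc Nat.card {y : R // y ^ p ^ t = 0}
      ≤ Nat.card {a : Rˣ ⧸ scalarUnits K R // a ^ p ^ t = 1} := Nat.card_le_card_of_injective F hF
    _ ≤ p ^ t := by
      rw [Nat.card_eq_fintype_card, Fintype.card_subtype]
      exact IsCyclic.card_pow_eq_one_le hpos

theorem natCard_pow_finrank_idealPow_le [Finite R] [Nontrivial R]
    [IsCyclic (Rˣ ⧸ scalarUnits K R)] (p : ℕ) [Fact p.Prime] [CharP K p] {I : Ideal R}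
    {N i t : ℕ} (hI : I ^ N = ⊥) (hN : N ≤ i * p ^ t) :
    Nat.card K ^ finrank K ((I ^ i).restrictScalars K) ≤ p ^ t := by
  have hnil (y : (I ^ i).restrictScalars K) : y.1 ^ p ^ t = 0 := by
    have hmem : y.1 ^ p ^ t ∈ I ^ (i * p ^ t) := pow_mul I i _ ▸ Ideal.pow_mem_pow y.2 _
    simpa [hI] using Ideal.pow_le_pow_right hN hmem
  have : Module.Finite K R := Module.Finite.of_finite
  calc Nat.card K ^ finrank K ((I ^ i).restrictScalars K)
      = Nat.card ((I ^ i).restrictScalars K) := (Module.natCard_eq_pow_finrank ..).symm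
    _ ≤ Nat.card {y : R // y ^ p ^ t = 0} :=
      Nat.card_le_card_of_injective (fun y => ⟨y.1, hnil y⟩) fun y z hyz =>
        Subtype.ext (congrArg (fun a : {y : R // y ^ p ^ t = 0} => a.1) hyz)
    _ ≤ p ^ t := natCard_pow_eq_zero_le (K := K) p t

theorem finrank_eq_finrank_maximalIdeal_add_one [IsLocalRing R] [Module.Finite K R] {I : Ideal R}
    (hI : finrank K (I.restrictScalars K) = 1) :
    finrank K R = finrank K ((maximalIdeal R).restrictScalars K) + 1 := by
  obtain ⟨y, hy_ne, hy⟩ := finrank_eq_one_iff'.1 hI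
  have hresidue (b : R) : ∃ β : K, b - algebraMap K R β ∈ maximalIdeal R := by
    obtain ⟨β, hβ⟩ := hy ⟨b * y, I.mul_mem_left b y.2⟩
    refine ⟨β, fun hunit => hy_ne (Subtype.ext ?_)⟩
    have hβ' : algebraMap K R β * y = b * y := by
      rw [← Algebra.smul_def]; exact congrArg Subtype.val hβ
    refine hunit.mul_right_eq_zero.1 ?_
    rw [sub_mul, hβ', sub_self]
  have hquot : finrank K (R ⧸ (maximalIdeal R).restrictScalars K) = 1 := by
    refine finrank_eq_one (Submodule.Quotient.mk 1) (fun h => ?_) fun b => ?_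
    · exact (Ideal.ne_top_iff_one _).1 (maximalIdeal.isMaximal R).ne_top
        ((Submodule.Quotient.mk_eq_zero _).1 h)
    · obtain ⟨b, rfl⟩ := Submodule.Quotient.mk_surjective _ b
      obtain ⟨β, hβ⟩ := hresidue b
      refine ⟨β, ?_⟩
      rw [← Submodule.Quotient.mk_smul, eq_comm, Submodule.Quotient.eq,
        ← Algebra.algebraMap_eq_smul_one]
      exact hβ
  rw [← Submodule.finrank_quotient_add_finrank ((maximalIdeal R).restrictScalars K), hquot,
    add_comm]

theorem exists_idealPow_succ_eq_bot {I : Ideal R} (hI : IsNilpotent I) (hne : I ≠ ⊥) :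
    ∃ s, 1 ≤ s ∧ I ^ (s + 1) = ⊥ ∧ I ^ s ≠ ⊥ := by
  have : Nontrivial (Ideal R) := ⟨I, ⊥, hne⟩
  have hpos : 0 < nilpotencyClass I := pos_nilpotencyClass_iff.2 hI
  refine ⟨nilpotencyClass I - 1, ?_, ?_, pow_pred_nilpotencyClass hI⟩
  · have := mt eq_zero_of_nilpotencyClass_eq_one hne
    omega
  · rw [Nat.sub_add_cancel hpos]
    exact pow_nilpotencyClass hI

theorem idealPow_succ_lt_idealPow {I : Ideal R} (hI : IsNilpotent I) {i : ℕ} (hi : I ^ i ≠ ⊥) :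
    I ^ (i + 1) < I ^ i := by
  refine (Ideal.pow_le_pow_right i.le_succ).lt_of_ne fun heq => hi ?_
  have hstable (k : ℕ) : I ^ (i + k) = I ^ i := by
    induction k with
    | zero => rfl
    | succ k ih => rw [← add_assoc, pow_succ, ih, ← pow_succ, heq]
  obtain ⟨N, hN⟩ := hI
  rw [← hstable N, pow_add, hN, mul_zero, Ideal.zero_eq_bot]

theorem finrank_idealPow_succ_lt [Module.Finite K R] {I : Ideal R} (hI : IsNilpotent I) {i : ℕ}
    (hi : I ^ i ≠ ⊥) :
    finrank K ((I ^ (i + 1)).restrictScalars K) < finrank K ((I ^ i).restrictScalars K) :=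
  Submodule.finrank_lt_finrank_of_lt (idealPow_succ_lt_idealPow hI hi)

theorem natCard_eq_and_finrank_eq_one_of_idealPow_succ_eq_bot [Finite R] [Nontrivial R]
    [IsCyclic (Rˣ ⧸ scalarUnits K R)] (p : ℕ) [Fact p.Prime] [CharP K p] {I : Ideal R} {s : ℕ}
    (hs : 1 ≤ s) (hbot : I ^ (s + 1) = ⊥) (hne : I ^ s ≠ ⊥) :
    Nat.card K = p ∧ finrank K ((I ^ s).restrictScalars K) = 1 := by
  have hp : p.Prime := Fact.out
  have : Module.Finite K R := Module.Finite.of_finite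
  have : Finite K := Finite.of_injective _ (algebraMap K R).injective
  have hp_le : p ≤ Nat.card K := by
    have := Fintype.ofFinite K
    exact Nat.le_of_dvd Nat.card_pos ((CharP.cast_eq_zero_iff K p _).1 (by simp))
  have hdim_pos : 1 ≤ finrank K ((I ^ s).restrictScalars K) :=
    Nat.one_le_of_lt (finrank_idealPow_succ_lt ⟨s + 1, hbot⟩ hne)
  have hcard : Nat.card K ^ finrank K ((I ^ s).restrictScalars K) ≤ p ^ 1 :=
    natCard_pow_finrank_idealPow_le p hbot (by nlinarith [hp.two_le])
  have hcard_eq : Nat.card K = p :=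
    le_antisymm (by simpa using (Nat.le_self_pow (by omega) _).trans hcard) hp_le
  rw [hcard_eq, Nat.pow_le_pow_iff_right hp.one_lt] at hcard
  exact ⟨hcard_eq, le_antisymm hcard hdim_pos⟩

theorem eq_one_or_eq_two_of_idealPow_succ_eq_bot [Finite R] [Nontrivial R]
    [IsCyclic (Rˣ ⧸ scalarUnits K R)] (p : ℕ) [Fact p.Prime] [CharP K p] {I : Ideal R} {s : ℕ}
    (hs : 1 ≤ s) (hbot : I ^ (s + 1) = ⊥) (hne : I ^ s ≠ ⊥) :
    s = 1 ∨ s = 2 ∧ p = 2 := by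
  have hp : p.Prime := Fact.out
  have : Module.Finite K R := Module.Finite.of_finite
  obtain ⟨hcard, hdim⟩ :=
    natCard_eq_and_finrank_eq_one_of_idealPow_succ_eq_bot (K := K) p hs hbot hne
  obtain ⟨r, rfl⟩ : ∃ r, s = r + 1 := ⟨s - 1, by omega⟩
  have hdim_lt := finrank_idealPow_succ_lt (K := K) (i := r) ⟨r + 1 + 1, hbot⟩
    fun h => hne (by rw [pow_succ, h, Ideal.bot_mul])
  have hlt : r * p < r + 2 := by
    by_contra! hle
    have hpow := natCard_pow_finrank_idealPow_le (K := K) (i := r) (t := 1) p hbot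
      (by rwa [pow_one])
    rw [hcard, Nat.pow_le_pow_iff_right hp.one_lt] at hpow
    omega
  have := hp.two_le
  rcases Nat.eq_zero_or_pos r with rfl | hr
  · exact .inl rfl
  · have hr1 : r = 1 := by nlinarith
    subst hr1
    exact .inr ⟨rfl, by omega⟩

variable (K R) in
theorem natCard_and_finrank_of_isCyclic_units_quotient [Finite R] [IsLocalRing R]
    [IsCyclic (Rˣ ⧸ scalarUnits K R)] (hR : ¬ IsField R) :
    (Nat.card K).Prime ∧ finrank K R = 2 ∨ Nat.card K = 2 ∧ finrank K R = 3 := by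
  have : Module.Finite K R := Module.Finite.of_finite
  obtain ⟨p, _⟩ := CharP.exists K
  have : Finite K := Finite.of_injective _ (algebraMap K R).injective
  have hp : p.Prime := CharP.char_is_prime K p
  have : Fact p.Prime := ⟨hp⟩
  let m := maximalIdeal R
  have hm : IsNilpotent m := by
    rw [show m = _ from (jacobson_eq_maximalIdeal ⊥ bot_ne_top).symm]
    exact IsArtinianRing.isNilpotent_jacobson_bot
  have hm_ne : m ≠ ⊥ := fun h => hR (isField_iff_maximalIdeal_eq.2 h)
  obtain ⟨s, hs, hbot, hne⟩ := exists_idealPow_succ_eq_bot hm hm_ne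
  obtain ⟨hcard, hdim⟩ :=
    natCard_eq_and_finrank_eq_one_of_idealPow_succ_eq_bot (K := K) p hs hbot hne
  rw [hcard, finrank_eq_finrank_maximalIdeal_add_one hdim]
  rcases eq_one_or_eq_two_of_idealPow_succ_eq_bot (K := K) p hs hbot hne with rfl | ⟨rfl, rfl⟩
  · rw [pow_one] at hdim
    exact .inl ⟨hp, by rw [hdim]⟩
  · have hlt := finrank_idealPow_succ_lt (K := K) (i := 1) hm (by rwa [pow_one])
    have hpow := natCard_pow_finrank_idealPow_le (K := K) (i := 1) (t := 2) 2 hbot (by norm_num)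
    rw [hcard, Nat.pow_le_pow_iff_right one_lt_two] at hpow
    rw [pow_one] at hlt hpow
    rw [hdim] at hlt
    exact .inr ⟨rfl, by rw [show finrank K _ = 2 from le_antisymm hpow hlt]⟩

end UnitsModScalars

section CyclicVector

variable {K V : Type*} [Field K] [AddCommGroup V] [Module K V]

theorem forall_exists_smul_pow_or {R : Type*} [CommRing R] [Algebra K R] [Finite R]
    {φ : R →ₗ[K] K} {x : R} (hφ : φ 1 ≠ 0) (hx : IsUnit x)
    (hpow : ∀ r, φ r ≠ 0 → ∃ c : K, ∃ k : ℕ, r = c • x ^ k) :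
    (∀ r, ∃ c : K, ∃ k : ℕ, r = c • x ^ k) ∨
      (Nat.card K).Prime ∧ finrank K R = 2 ∨ Nat.card K = 2 ∧ finrank K R = 3 := by
  obtain ⟨x, rfl⟩ := hx
  have : Nontrivial R := ⟨1, 0, fun h => hφ (by rw [h, map_zero])⟩
  have hunit : ∀ r, φ r ≠ 0 → IsUnit r := by
    intro r hr
    obtain ⟨c, k, rfl⟩ := hpow r hr
    have hc : c ≠ 0 := by
      rintro rfl
      exact hr (by rw [zero_smul, map_zero])
    rw [Algebra.smul_def]
    exact (hc.isUnit.map _).mul (x.isUnit.pow k)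
  have htop : (Subgroup.zpowers (x : Rˣ ⧸ scalarUnits K R)).comap (QuotientGroup.mk' _) = ⊤ :=
    eq_top_of_compl_ker_subset_units (φ := φ.toAddMonoidHom) hφ fun r hr =>
      ⟨(hunit r hr).unit, mk_mem_zpowers_mk_iff.2 (hpow r hr), rfl⟩
  have hgen (u : Rˣ) : (u : Rˣ ⧸ scalarUnits K R) ∈ Subgroup.zpowers (x : Rˣ ⧸ scalarUnits K R) :=
    (Subgroup.eq_top_iff' _).1 htop u
  by_cases hR : IsField R
  · refine .inl fun r => ?_
    rcases eq_or_ne r 0 with rfl | hr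
    · exact ⟨0, 0, (zero_smul K _).symm⟩
    · obtain ⟨s, hs⟩ := hR.mul_inv_cancel hr
      exact mk_mem_zpowers_mk_iff.1 (hgen (Units.mkOfMulEqOne r s hs))
  · have : IsCyclic (Rˣ ⧸ scalarUnits K R) :=
      ⟨_, fun a => QuotientGroup.induction_on a hgen⟩
    have : IsLocalRing R :=
      isLocalRing_of_compl_ker_subset_units (φ := φ.toAddMonoidHom) hφ hunit
    exact .inr (natCard_and_finrank_of_isCyclic_units_quotient K R hR)

theorem exists_quotient_equiv_of_cyclic {f : Module.End K V} {v₀ : V}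
    (hf : ∀ v, ∃ P : K[X], aeval f P v₀ = v) :
    ∃ (I : Ideal K[X]) (e : (K[X] ⧸ I) ≃ₗ[K] V), ∀ P, e (Ideal.Quotient.mk I P) = aeval f P v₀ := by
  let ev : K[X] →ₗ[K[X]] AEval' f := LinearMap.toSpanSingleton K[X] _ (AEval'.of f v₀)
  have hev (P : K[X]) : (AEval'.of f).symm (ev P) = aeval f P v₀ := by simp [ev]
  have hsurj : Function.Surjective ev := fun v => by
    obtain ⟨P, hP⟩ := hf ((AEval'.of f).symm v)
    exact ⟨P, (AEval'.of f).symm.injective (by rw [hev, hP])⟩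
  exact ⟨LinearMap.ker ev,
    ((ev.quotKerEquivOfSurjective hsurj).restrictScalars K).trans (AEval'.of f).symm, hev⟩

theorem exists_aeval_apply_eq {f : Module.End K V} {φ : V →ₗ[K] K} {v₀ : V} (hφ : φ v₀ ≠ 0)
    (hf : ∀ v, φ v ≠ 0 → ∃ c : K, ∃ k : ℕ, v = c • (f ^ k) v₀) (v : V) :
    ∃ P : K[X], aeval f P v₀ = v := by
  let ev : K[X] →ₗ[K] V := (LinearMap.applyₗ v₀).comp (aeval f).toLinearMap
  have hrange : ev.range.toAddSubgroup = ⊤ := by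
    refine addSubgroup_eq_top_of_compl_ker_subset φ.toAddMonoidHom hφ fun v hv => ?_
    obtain ⟨c, k, rfl⟩ := hf v hv
    exact ⟨c • X ^ k, by simp [ev]⟩
  exact (AddSubgroup.eq_top_iff' _).1 hrange v

theorem forall_exists_smul_pow_apply_or [Finite V] (g : LinearMap.GeneralLinearGroup K V)
    {φ : V →ₗ[K] K} {v₀ : V} (hφ : φ v₀ ≠ 0)
    (hg : ∀ v, φ v ≠ 0 → ∃ c : K, ∃ k : ℕ, v = c • g ^ k • v₀) :
    (∀ v, ∃ c : K, ∃ k : ℕ, v = c • g ^ k • v₀) ∨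
      (Nat.card K).Prime ∧ finrank K V = 2 ∨ Nat.card K = 2 ∧ finrank K V = 3 := by
  obtain ⟨I, e, he⟩ := exists_quotient_equiv_of_cyclic (exists_aeval_apply_eq hφ hg)
  let x : K[X] ⧸ I := Ideal.Quotient.mk I X
  have he_pow (k : ℕ) : e (x ^ k) = g ^ k • v₀ := by
    rw [← map_pow, he, map_pow, aeval_X]; rfl
  have he_smul (r : K[X] ⧸ I) :
      (∃ c : K, ∃ k : ℕ, r = c • x ^ k) ↔ ∃ c : K, ∃ k : ℕ, e r = c • g ^ k • v₀ := by
    simp only [← he_pow, ← map_smul, e.injective.eq_iff]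
  have he_one : e 1 = v₀ := by simpa using he_pow 0
  have : Finite (K[X] ⧸ I) := Finite.of_equiv V e.symm.toEquiv
  have : Finite (V →ₗ[K] V) := DFunLike.finite _
  have hx : IsUnit x := by
    refine IsUnit.of_pow_eq_one (e.injective ?_) (orderOf_pos g).ne'
    rw [he_pow, pow_orderOf_eq_one, one_smul, he_one]
  rw [← e.finrank_eq]
  refine (forall_exists_smul_pow_or (φ := φ.comp e.toLinearMap) (by simpa [he_one]) hx
    fun r hr => (he_smul r).2 (hg _ hr)).imp_left fun h v => ?_
  simpa using (he_smul (e.symm v)).1 (h _)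

theorem map_rep_mk_ne_zero_iff (φ : V →ₗ[K] K) {v : V} (hv : v ≠ 0) :
    φ (Projectivization.mk K v hv).rep ≠ 0 ↔ φ v ≠ 0 := by
  obtain ⟨a, ha⟩ := Projectivization.exists_smul_eq_mk_rep K v hv
  simp [← ha, Units.smul_def]

theorem pow_smul_eq_mk_iff {g : LinearMap.GeneralLinearGroup K V} {k : ℕ} {P : ℙ K V} {v : V}
    (hv : v ≠ 0) :
    g ^ k • P = Projectivization.mk K v hv ↔ ∃ c : K, v = c • g ^ k • P.rep := by
  nth_rewrite 1 [← P.mk_rep]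
  rw [Projectivization.smul_mk, eq_comm, Projectivization.mk_eq_mk_iff']
  exact exists_congr fun c => eq_comm

theorem forall_exists_pow_smul_eq_or [Finite V] (g : LinearMap.GeneralLinearGroup K V)
    {φ : V →ₗ[K] K} {P₀ : ℙ K V} (hP₀ : φ P₀.rep ≠ 0)
    (hg : ∀ P : ℙ K V, φ P.rep ≠ 0 → ∃ k : ℕ, g ^ k • P₀ = P) :
    (∀ P : ℙ K V, ∃ k : ℕ, g ^ k • P₀ = P) ∨
      (Nat.card K).Prime ∧ finrank K V = 2 ∨ Nat.card K = 2 ∧ finrank K V = 3 := by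
  have hvec (v : V) (hv : φ v ≠ 0) : ∃ c : K, ∃ k : ℕ, v = c • g ^ k • P₀.rep := by
    have hv₀ : v ≠ 0 := by
      rintro rfl
      exact hv (map_zero φ)
    obtain ⟨k, hk⟩ := hg _ ((map_rep_mk_ne_zero_iff φ hv₀).2 hv)
    obtain ⟨c, hc⟩ := (pow_smul_eq_mk_iff hv₀).1 hk
    exact ⟨c, k, hc⟩
  refine (forall_exists_smul_pow_apply_or g hP₀ hvec).imp_left fun h P => ?_
  obtain ⟨c, k, hc⟩ := h P.rep
  exact ⟨k, by rw [(pow_smul_eq_mk_iff P.rep_nonzero).2 ⟨c, hc⟩, P.mk_rep]⟩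

end CyclicVector

section FirstReturn

variable {α β : Type*}

/-- `g` is the first return map of `f` to the subset `Set.range ι`, transported to `β` along `ι`:
`ι (g b)` is the first of `f (ι b)`, `f (f (ι b))`, … to lie in `Set.range ι`. -/
def IsFirstReturn (f : α → α) (ι : β → α) (g : β → β) : Prop :=
  ∀ b, ∃ k, 0 < k ∧ f^[k] (ι b) = ι (g b) ∧ ∀ j, 0 < j → j < k → f^[j] (ι b) ∉ Set.range ι

variable {f : α → α} {ι : β → α} {g : β → β}

theorem IsFirstReturn.exists_iterate_eq (h : IsFirstReturn f ι g) (b : β) (j : ℕ) :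
    ∃ k, f^[k] (ι b) = ι (g^[j] b) := by
  induction j with
  | zero => exact ⟨0, rfl⟩
  | succ j ih =>
    obtain ⟨k, hk⟩ := ih
    obtain ⟨l, -, hl, -⟩ := h (g^[j] b)
    exact ⟨l + k, by rw [Function.iterate_add_apply, hk, hl, Function.iterate_succ_apply']⟩

theorem IsFirstReturn.exists_iterate_eq_iff (h : IsFirstReturn f ι g) (hι : Function.Injective ι)
    {b c : β} : (∃ j, g^[j] b = c) ↔ ∃ k, f^[k] (ι b) = ι c := by
  constructor
  · rintro ⟨j, rfl⟩
    exact h.exists_iterate_eq b j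
  · rintro ⟨k, hk⟩
    induction k using Nat.strong_induction_on generalizing b with
    | _ k ih =>
      rcases Nat.eq_zero_or_pos k with rfl | hpos
      · exact ⟨0, hι hk⟩
      · obtain ⟨l, hl_pos, hl, hfirst⟩ := h b
        have hle : l ≤ k := not_lt.1 fun hlt => hfirst k hpos hlt ⟨c, hk.symm⟩
        obtain ⟨j, hj⟩ := ih (k - l) (by omega) (b := g b) (by
          rw [← hl, ← Function.iterate_add_apply, Nat.sub_add_cancel hle, hk])
        exact ⟨j + 1, hj⟩

theorem forall_exists_iterate_eq_of_injective [Finite α] (hf : Function.Injective f) {a : α}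
    (ha : ∀ b, ∃ k, f^[k] a = b) (b c : α) : ∃ k, f^[k] b = c := by
  obtain ⟨i, rfl⟩ := ha b
  obtain ⟨j, rfl⟩ := ha c
  obtain ⟨N, hN_pos, hN⟩ := hf.mem_periodicPts a
  have hle : i ≤ N * i := Nat.le_mul_of_pos_left i hN_pos
  refine ⟨j + (N * i - i), ?_⟩
  rw [← Function.iterate_add_apply, add_assoc, Nat.sub_add_cancel hle, Function.iterate_add_apply,
    (hN.mul_const i).eq]

end FirstReturn

section FractionalJump

variable {K : Type*} [Field K] {n : ℕ}

theorem projMap_injective (M : GL (Fin (n + 1)) K) : Function.Injective (projMap M) :=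
  Projectivization.map_injective _ _

theorem projMap_iterate (M : GL (Fin (n + 1)) K) (k : ℕ) (P : ℙ K (Fin (n + 1) → K)) :
    (projMap M)^[k] P = Matrix.GeneralLinearGroup.toLin M ^ k • P :=
  smul_iterate_apply (Matrix.GeneralLinearGroup.toLin M) k P

theorem toProj_injective : Function.Injective (toProj : (Fin n → K) → _) := by
  intro x y hxy
  obtain ⟨a, ha⟩ := (Projectivization.mk_eq_mk_iff' K _ _ _ _).1 hxy
  have ha_one : a = 1 := by simpa using congrFun ha (Fin.last n)
  funext i
  simpa [ha_one] using (congrFun ha i.castSucc).symm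

theorem toProj_mem_affineChart (x : Fin n → K) : toProj x ∈ affineChart K n :=
  (map_rep_mk_ne_zero_iff (LinearMap.proj (Fin.last n) : (Fin (n + 1) → K) →ₗ[K] K) _).2
    (by simp)

theorem toProj_fromProj {P : ℙ K (Fin (n + 1) → K)} (hP : P ∈ affineChart K n) :
    toProj (fromProj P) = P := by
  have hlast : P.rep (Fin.last n) ≠ 0 := hP
  conv_rhs => rw [← P.mk_rep]
  refine (Projectivization.mk_eq_mk_iff' K _ _ _ _).2 ⟨(P.rep (Fin.last n))⁻¹, ?_⟩
  funext i
  cases i using Fin.lastCases with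
  | last => simp [hlast]
  | cast i => simp [fromProj, div_eq_inv_mul]

theorem isFirstReturn_fracJump [Finite K] (M : GL (Fin (n + 1)) K) :
    IsFirstReturn (projMap M) toProj (fracJump M) := by
  intro x
  obtain ⟨N, hN_pos, hN⟩ := (projMap_injective M).mem_periodicPts (toProj x)
  have hreturns : {k : ℕ | 1 ≤ k ∧ (projMap M)^[k] (toProj x) ∈ affineChart K n}.Nonempty :=
    ⟨N, hN_pos, hN.symm ▸ toProj_mem_affineChart x⟩
  obtain ⟨hpos, hmem⟩ := Nat.sInf_mem hreturns
  refine ⟨jumpIndex M x, hpos, (toProj_fromProj hmem).symm, ?_⟩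
  rintro j hj_pos hj_lt ⟨y, hy⟩
  exact Nat.notMem_of_lt_sInf hj_lt ⟨hj_pos, hy ▸ toProj_mem_affineChart y⟩

end FractionalJump

/-- Provided we are not in the exceptional cases (`q` prime and `n = 1`) or (`q = 2` and
`n = 2`), an automorphism `Ψ = [M] ∈ PGL_{n+1}(F_q)` acts transitively on `ℙ^n` if and only
if its fractional jump `ψ` acts transitively on `A^n = F_q^n`. -/
theorem statement10 {K : Type*} [Field K] [Fintype K] (n : ℕ) (hn : 0 < n)
    (M : GL (Fin (n + 1)) K)
    (h1 : ¬(Nat.Prime (Fintype.card K) ∧ n = 1))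
    (h2 : ¬(Fintype.card K = 2 ∧ n = 2)) :
    ProjTransitive M ↔ ∀ u v : Fin n → K, ∃ k : ℕ, (fracJump M)^[k] u = v := by
  have hreturn := isFirstReturn_fracJump M
  constructor
  · exact fun htrans u v => (hreturn.exists_iterate_eq_iff toProj_injective).2 (htrans _ _)
  · intro htrans
    have horbit (P) (hP : P ∈ affineChart K n) :
        ∃ k : ℕ, Matrix.GeneralLinearGroup.toLin M ^ k • toProj 0 = P := by
      simpa only [projMap_iterate, toProj_fromProj hP] using
        (hreturn.exists_iterate_eq_iff toProj_injective).1 (htrans 0 (fromProj P))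
    have hdichotomy := forall_exists_pow_smul_eq_or (Matrix.GeneralLinearGroup.toLin M)
      (φ := LinearMap.proj (Fin.last n)) (toProj_mem_affineChart 0) horbit
    simp only [Nat.card_eq_fintype_card, Module.finrank_fin_fun, ← projMap_iterate] at hdichotomy
    rcases hdichotomy with hall | ⟨hq, hn₁⟩ | ⟨hq, hn₂⟩
    · exact forall_exists_iterate_eq_of_injective (projMap_injective M) hall
    · exact absurd ⟨hq, by omega⟩ h1
    · exact absurd ⟨hq, by omega⟩ h2
end

section
/- Let Ψ = [M] ∈ PGL_{n+1}(F_q) be transitive on ℙ^n, let x = (x_1,…,x_n) ∈ F_q^n, and let j be the smallest integer i ≥ 1 such that the last coordinate of the column vector M^i · (x_1,…,x_n,1)^T is nonzero. Then j equals the fractional jump index J_{π(x),Ψ}, and writing M^j · (x_1,…,x_n,1)^T = (y_1,…,y_n,b)^T with b ≠ 0, the fractional jump satisfies ψ(x) = (y_1/b, …, y_n/b). In particular, ψ is given piecewise by n-tuples of degree-1 rational functions with a common degree-1 denominator. -/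
/-!
Iterating `Ψ = [M]` sends `[v]` to `[M ^ k v]`. Membership in the chart `U` and the affine
coordinates `v_i / v_n` depend on a vector only up to scaling, so both can be read off the
vector `M ^ k (x, 1)ᵀ` in place of the representative chosen by `Projectivization.rep`.
-/

section FractionalJump

open Projectivization
open scoped Matrix

theorem mulVec_ne_zero_of_isUnit {m R : Type*} [Fintype m] [DecidableEq m] [Semiring R]
    {A : Matrix m m R} (hA : IsUnit A) {v : m → R} (hv : v ≠ 0) : A *ᵥ v ≠ 0 :=
  A.mulVec_zero ▸ (Matrix.mulVec_injective_of_isUnit hA).ne hv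

variable {K : Type*} [Field K] {n : ℕ}

theorem projMap_mk (M : GL (Fin (n + 1)) K) {v : Fin (n + 1) → K} (hv : v ≠ 0) :
    projMap M (mk K v hv) = mk K (M.val *ᵥ v) (mulVec_ne_zero_of_isUnit M.isUnit hv) :=
  rfl

theorem projMap_one : projMap (1 : GL (Fin (n + 1)) K) = id := by
  ext P
  induction P with | h v hv => simp [projMap_mk]

theorem projMap_mul (M N : GL (Fin (n + 1)) K) : projMap (M * N) = projMap M ∘ projMap N := by
  ext P
  induction P with | h v hv => simp [projMap_mk]

theorem iterate_projMap (M : GL (Fin (n + 1)) K) (k : ℕ) :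
    (projMap M)^[k] = projMap (M ^ k) := by
  induction k with
  | zero => rw [Function.iterate_zero, pow_zero, projMap_one]
  | succ k ih => rw [Function.iterate_succ, ih, pow_succ, projMap_mul]

theorem iterate_projMap_mk (M : GL (Fin (n + 1)) K) (k : ℕ) {v : Fin (n + 1) → K} (hv : v ≠ 0) :
    (projMap M)^[k] (mk K v hv) =
      mk K ((M.val ^ k) *ᵥ v) (mulVec_ne_zero_of_isUnit (M.isUnit.pow k) hv) := by
  simp only [iterate_projMap, projMap_mk, Units.val_pow_eq_pow_val]

theorem mk_mem_affineChart_iff {v : Fin (n + 1) → K} (hv : v ≠ 0) :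
    mk K v hv ∈ affineChart K n ↔ v (Fin.last n) ≠ 0 := by
  obtain ⟨c, hc⟩ := exists_smul_eq_mk_rep K v hv
  simp [affineChart, ← hc, Units.smul_def]

theorem fromProj_mk {v : Fin (n + 1) → K} (hv : v ≠ 0) (i : Fin n) :
    fromProj (mk K v hv) i = v i.castSucc / v (Fin.last n) := by
  obtain ⟨c, hc⟩ := exists_smul_eq_mk_rep K v hv
  simp only [fromProj, ← hc, Units.smul_def, Pi.smul_apply, smul_eq_mul]
  exact mul_div_mul_left _ _ c.ne_zero

theorem jumpIndex_eq_sInf (M : GL (Fin (n + 1)) K) (x : Fin n → K) :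
    jumpIndex M x = sInf {k : ℕ | 1 ≤ k ∧ ((M.val ^ k) *ᵥ Fin.snoc x 1) (Fin.last n) ≠ 0} := by
  simp only [jumpIndex, toProj, iterate_projMap_mk, mk_mem_affineChart_iff]

theorem fracJump_apply (M : GL (Fin (n + 1)) K) (x : Fin n → K) (i : Fin n) :
    fracJump M x i = ((M.val ^ jumpIndex M x) *ᵥ Fin.snoc x 1) i.castSucc /
      ((M.val ^ jumpIndex M x) *ᵥ Fin.snoc x 1) (Fin.last n) := by
  rw [fracJump, toProj, iterate_projMap_mk, fromProj_mk]

theorem statement11_general (M : GL (Fin (n + 1)) K) (x : Fin n → K) {j : ℕ}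
    (hj : IsLeast {k : ℕ | 1 ≤ k ∧ ((M.val ^ k) *ᵥ Fin.snoc x 1) (Fin.last n) ≠ 0} j) :
    j = jumpIndex M x ∧
      ∀ i : Fin n, fracJump M x i = ((M.val ^ j) *ᵥ Fin.snoc x 1) i.castSucc /
        ((M.val ^ j) *ᵥ Fin.snoc x 1) (Fin.last n) := by
  have hjump : jumpIndex M x = j := (jumpIndex_eq_sInf M x).trans hj.csInf_eq
  exact ⟨hjump.symm, fun i => hjump ▸ fracJump_apply M x i⟩

end FractionalJump

/-- Let `Ψ = [M] ∈ PGL_{n+1}(F_q)` be transitive on `ℙ^n`, let `x ∈ F_q^n`, and let `j` be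
the smallest integer `i ≥ 1` such that the last coordinate of `M^i ⬝ (x, 1)ᵀ` is nonzero.
Then `j` equals the fractional jump index of `Ψ` at `π(x)`, and writing
`M^j ⬝ (x, 1)ᵀ = (y_1, …, y_n, b)ᵀ` with `b ≠ 0`, the fractional jump satisfies
`ψ(x) = (y_1/b, …, y_n/b)`. -/
theorem statement11 {K : Type*} [Field K] [Fintype K] (n : ℕ) (hn : 0 < n)
    (M : GL (Fin (n + 1)) K) (htrans : ProjTransitive M) (x : Fin n → K) (j : ℕ)
    (hj1 : 1 ≤ j)
    (hj2 : ((M : Matrix (Fin (n + 1)) (Fin (n + 1)) K) ^ j).mulVec (Fin.snoc x 1)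
        (Fin.last n) ≠ 0)
    (hjmin : ∀ i : ℕ, 1 ≤ i → i < j →
      ((M : Matrix (Fin (n + 1)) (Fin (n + 1)) K) ^ i).mulVec (Fin.snoc x 1)
        (Fin.last n) = 0) :
    j = jumpIndex M x ∧
      ∀ i : Fin n, fracJump M x i =
        ((M : Matrix (Fin (n + 1)) (Fin (n + 1)) K) ^ j).mulVec (Fin.snoc x 1)
            (Fin.castSucc i) /
          ((M : Matrix (Fin (n + 1)) (Fin (n + 1)) K) ^ j).mulVec (Fin.snoc x 1)
            (Fin.last n) :=
  statement11_general M x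
    ⟨⟨hj1, hj2⟩, fun i ⟨hi, hne⟩ => not_lt.mp fun hlt => hne (hjmin i hi hlt)⟩
end

section
/- Let ℓ and n be positive integers and p_1, …, p_ℓ distinct primes. For each i ∈ {1,…,ℓ}, let ψ_i : F_{p_i}^n → F_{p_i}^n be a transitive map (for instance, the fractional jump of a transitive projective automorphism of ℙ^n(F_{p_i})). Let N = p_1⋯p_ℓ and R = Z/NZ. Then there exists a transitive map ψ : R^n → R^n such that for every i ∈ {1,…,ℓ}, the reduction of ψ modulo p_i is ψ_i; that is, π_i ∘ ψ = ψ_i ∘ π_i, where π_i : R^n → F_{p_i}^n is coordinatewise reduction modulo p_i. -/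
/-!
By the Chinese remainder theorem `(ℤ/Nℤ)ⁿ` is the product of the `(ℤ/pᵢℤ)ⁿ`, and `Ψ` is the product
of the `ψᵢ`. Each `ψᵢ` is a single cycle of length `pᵢⁿ`; as these lengths are pairwise coprime, a
second application of the Chinese remainder theorem, this time to the numbers of steps taken along
the cycles, shows that the product map is a single cycle as well.
-/

open Function

/-- Transitivity of a self-map: every point is reached from every point by iteration. On a finite
nonempty set this says that the map is a permutation consisting of a single cycle. -/
def IsTransitiveMap {α : Type*} (f : α → α) : Prop :=
  ∀ u v, ∃ k : ℕ, f^[k] u = v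

namespace IsTransitiveMap

variable {α β : Type*} {f : α → α} {g : β → β}

theorem of_semiconj (hf : IsTransitiveMap f) {φ : α → β} (hφ : Surjective φ)
    (h : Semiconj φ f g) : IsTransitiveMap g := by
  intro u v
  obtain ⟨x, rfl⟩ := hφ u
  obtain ⟨y, rfl⟩ := hφ v
  obtain ⟨k, hk⟩ := hf x y
  exact ⟨k, by rw [← h.iterate_right k x, hk]⟩

theorem mem_periodicPts (hf : IsTransitiveMap f) (u : α) : u ∈ periodicPts f := by
  obtain ⟨k, hk⟩ := hf (f u) u
  exact mk_mem_periodicPts k.succ_pos hk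

theorem minimalPeriod_eq_card (hf : IsTransitiveMap f) (u : α) :
    minimalPeriod f u = Nat.card α := by
  have hbij : Bijective fun k : Fin (minimalPeriod f u) => f^[k] u := by
    refine ⟨fun a b hab => Fin.ext (iterate_injOn_Iio_minimalPeriod a.2 b.2 hab), fun v => ?_⟩
    obtain ⟨k, rfl⟩ := hf u v
    have hpos := minimalPeriod_pos_of_mem_periodicPts (hf.mem_periodicPts u)
    exact ⟨⟨k % minimalPeriod f u, Nat.mod_lt k hpos⟩, iterate_mod_minimalPeriod_eq⟩
  simpa using Nat.card_eq_of_bijective _ hbij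

theorem card_ne_zero (hf : IsTransitiveMap f) (u : α) : Nat.card α ≠ 0 := by
  rw [← hf.minimalPeriod_eq_card u]
  exact (minimalPeriod_pos_of_mem_periodicPts (hf.mem_periodicPts u)).ne'

theorem iterate_eq_of_modEq_card (hf : IsTransitiveMap f) {k m : ℕ}
    (h : k ≡ m [MOD Nat.card α]) (u : α) : f^[k] u = f^[m] u := by
  have hu : IsPeriodicPt f (Nat.card α) u :=
    hf.minimalPeriod_eq_card u ▸ isPeriodicPt_minimalPeriod f u
  rw [← hu.iterate_mod_apply k, h, hu.iterate_mod_apply m]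

theorem piMap {ι : Type*} [Finite ι] {α : ι → Type*} {f : ∀ i, α i → α i}
    (hf : ∀ i, IsTransitiveMap (f i)) (hco : Pairwise (Nat.Coprime on fun i => Nat.card (α i))) :
    IsTransitiveMap (Pi.map f) := by
  intro u v
  cases nonempty_fintype ι
  choose k hk using fun i => hf i (u i) (v i)
  obtain ⟨K, hK⟩ := Nat.chineseRemainderOfFinset k (fun i => Nat.card (α i)) Finset.univ
    (fun i _ => (hf i).card_ne_zero (u i)) (hco.set_pairwise _)
  refine ⟨K, funext fun i => ?_⟩
  rw [Pi.map_iterate, Pi.map_apply, (hf i).iterate_eq_of_modEq_card (hK i (Finset.mem_univ i)),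
    hk i]

end IsTransitiveMap

theorem pairwise_coprime_card_zmod_vector {ι κ : Type*} [Finite κ] {m : ι → ℕ}
    (hm : Pairwise (Nat.Coprime on m)) :
    Pairwise (Nat.Coprime on fun i => Nat.card (κ → ZMod (m i))) := by
  intro i j hij
  simp only [onFun, Nat.card_fun, Nat.card_zmod]
  exact (hm hij).pow _ _

section ChineseRemainder

variable {ι : Type*} [Fintype ι] (κ : Type*) (m : ι → ℕ) (hm : Pairwise (Nat.Coprime on m))

/-- The Chinese remainder theorem applied to each coordinate of a vector indexed by `κ`, with the
residues grouped by modulus. -/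
noncomputable def zmodVectorEquivPi : (κ → ZMod (∏ i, m i)) ≃ ∀ i, κ → ZMod (m i) :=
  (Equiv.piCongrRight fun _ => (ZMod.prodEquivPi m hm).toEquiv).trans (Equiv.piComm _)

theorem zmodVectorEquivPi_apply (x : κ → ZMod (∏ i, m i)) (i : ι) :
    zmodVectorEquivPi κ m hm x i =
      ZMod.castHom (Finset.dvd_prod_of_mem m (Finset.mem_univ i)) (ZMod (m i)) ∘ x :=
  funext fun j => ZMod.prodEquivPi_apply m hm (x j) i

end ChineseRemainder

theorem statement14_general {ι κ : Type*} [Fintype ι] [Finite κ] {m : ι → ℕ}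
    (hm : Pairwise (Nat.Coprime on m)) {ψ : ∀ i, (κ → ZMod (m i)) → (κ → ZMod (m i))}
    (hψ : ∀ i, IsTransitiveMap (ψ i)) :
    ∃ Ψ : (κ → ZMod (∏ i, m i)) → (κ → ZMod (∏ i, m i)),
      IsTransitiveMap Ψ ∧
      ∀ i, Semiconj
        (ZMod.castHom (Finset.dvd_prod_of_mem m (Finset.mem_univ i)) (ZMod (m i)) ∘ ·)
        Ψ (ψ i) := by
  let e := zmodVectorEquivPi κ m hm
  have hprod : IsTransitiveMap (Pi.map ψ) :=
    .piMap hψ (pairwise_coprime_card_zmod_vector hm)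
  have hsymm : Semiconj e.symm (Pi.map ψ) (e.symm ∘ Pi.map ψ ∘ e) := fun y => by simp
  refine ⟨e.symm ∘ Pi.map ψ ∘ e, hprod.of_semiconj e.symm.surjective hsymm, fun i x => ?_⟩
  simp only [← zmodVectorEquivPi_apply κ m hm]
  exact congrFun (e.apply_symm_apply (Pi.map ψ (e x))) i

/-- Compound generator: given distinct primes `p_1, …, p_ℓ` and, for each `i`, a transitive
map `ψ_i : F_{p_i}^n → F_{p_i}^n` (for instance a fractional jump of a transitive projective
automorphism), there exists a transitive map `Ψ` on `(Z/NZ)^n`, where `N = p_1 ⋯ p_ℓ`,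
whose coordinatewise reduction modulo `p_i` is `ψ_i` for every `i`. -/
theorem statement14 (ℓ n : ℕ) (hℓ : 0 < ℓ) (hn : 0 < n) (p : Fin ℓ → ℕ)
    (hp : ∀ i, (p i).Prime) (hdist : Function.Injective p)
    (ψ : ∀ i : Fin ℓ, (Fin n → ZMod (p i)) → (Fin n → ZMod (p i)))
    (htrans : ∀ i, ∀ u v : Fin n → ZMod (p i), ∃ k : ℕ, (ψ i)^[k] u = v) :
    ∃ Ψ : (Fin n → ZMod (∏ i, p i)) → (Fin n → ZMod (∏ i, p i)),
      (∀ u v : Fin n → ZMod (∏ i, p i), ∃ k : ℕ, Ψ^[k] u = v) ∧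
      ∀ (i : Fin ℓ) (x : Fin n → ZMod (∏ i, p i)),
        (fun j => ZMod.castHom (Finset.dvd_prod_of_mem p (Finset.mem_univ i))
            (ZMod (p i)) (Ψ x j)) =
          ψ i (fun j => ZMod.castHom (Finset.dvd_prod_of_mem p (Finset.mem_univ i))
            (ZMod (p i)) (x j)) := by
  have hco : Pairwise (Nat.Coprime on p) :=
    fun i j hij => (Nat.coprime_primes (hp i) (hp j)).2 (hdist.ne hij)
  exact statement14_general hco htrans
end
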